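/- arXiv:quant-ph/0311038 — 8 statements merged into one kernel-verified Lean document; each statement's English description precedes it below -/
import Mathlib

section
/- Suppose x ∈ E and θ ∈ ℝ satisfy U(P x) = e^{iθ} x, and suppose the operator I − e^{iθ} U† is invertible, where U† denotes the adjoint of U. Then x = 2⟪w, x⟫ · (I − e^{iθ} U†)⁻¹ w. -/
open scoped InnerProductSpace

/-- Let `E` be a finite-dimensional complex inner product space,
`U` a unitary operator on `E`, `w` a unit vector, and `P x = x - 2⟪w,x⟫ w`.
Suppose `U (P x) = e^{iθ} x` and the operator `I - e^{iθ} U†` is invertible, with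
inverse `T`.  Then `x = 2⟪w,x⟫ • T w`. -/
theorem subset_finding_eigvec_formula
    {E : Type*} [NormedAddCommGroup E] [InnerProductSpace ℂ E]
    [FiniteDimensional ℂ E]
    (U : E →L[ℂ] E) (hU : U ∈ unitary (E →L[ℂ] E))
    (w : E) (hw : ‖w‖ = 1)
    (x : E) (θ : ℝ)
    (hx : U (x - (2 * ⟪w, x⟫_ℂ) • w) = Complex.exp (θ * Complex.I) • x)
    (T : E →L[ℂ] E)
    (hT₁ : T * (1 - Complex.exp (θ * Complex.I) • ContinuousLinearMap.adjoint U) = 1)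
    (hT₂ : (1 - Complex.exp (θ * Complex.I) • ContinuousLinearMap.adjoint U) * T = 1) :
    x = (2 * ⟪w, x⟫_ℂ) • T w := by
  have hUU : ContinuousLinearMap.adjoint U * U = 1 := by
    have h := (Unitary.mem_iff.mp hU).1
    rwa [ContinuousLinearMap.star_eq_adjoint] at h
  -- Applying `U†` to the eigenvector equation gives `P x = e^{iθ} U† x`.
  have hP : x - (2 * ⟪w, x⟫_ℂ) • w
      = Complex.exp (θ * Complex.I) • ContinuousLinearMap.adjoint U x := by
    rw [← map_smul, ← hx]
    exact (DFunLike.congr_fun hUU _).symm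
  have hw' : (1 - Complex.exp (θ * Complex.I) • ContinuousLinearMap.adjoint U) x
      = (2 * ⟪w, x⟫_ℂ) • w := by
    change x - Complex.exp (θ * Complex.I) • ContinuousLinearMap.adjoint U x = _
    rw [← hP, sub_sub_cancel]
  rw [← map_smul, ← hw']
  exact (DFunLike.congr_fun hT₁ x).symm
end

section
/- Suppose x ∈ E and θ ∈ ℝ satisfy U(P x) = e^{iθ} x with ⟪w, x⟫ ≠ 0, and suppose the operator I − e^{iθ} U† is invertible, where U† denotes the adjoint of U. Then ⟪w, (I − e^{iθ} U†)⁻¹ w⟫ = 1/2. -/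
/-!
Since `U† U = 1`, the eigenvalue equation `U (P x) = e^{iθ} x` becomes
`(1 - e^{iθ} U†) x = 2⟪w,x⟫ w`. Applying the inverse `T` gives `x = 2⟪w,x⟫ T w`; the inner
product with `w` is `⟪w,x⟫ = 2⟪w,x⟫⟪w, T w⟫`, and `⟪w,x⟫ ≠ 0` cancels.
-/

open scoped InnerProductSpace

/-- Let `E` be a finite-dimensional complex inner product space,
`U` a unitary operator on `E`, `w` a unit vector, and `P x = x - 2⟪w,x⟫ w`.
Suppose `U (P x) = e^{iθ} x` with `⟪w,x⟫ ≠ 0`, and the operator `I - e^{iθ} U†`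
is invertible, with inverse `T`.  Then `⟪w, T w⟫ = 1/2`. -/
theorem subset_finding_eigval_condition
    {E : Type*} [NormedAddCommGroup E] [InnerProductSpace ℂ E]
    [FiniteDimensional ℂ E]
    (U : E →L[ℂ] E) (hU : U ∈ unitary (E →L[ℂ] E))
    (w : E) (hw : ‖w‖ = 1)
    (x : E) (θ : ℝ) (hwx : ⟪w, x⟫_ℂ ≠ 0)
    (hx : U (x - (2 * ⟪w, x⟫_ℂ) • w) = Complex.exp (θ * Complex.I) • x)
    (T : E →L[ℂ] E)
    (hT₁ : T * (1 - Complex.exp (θ * Complex.I) • ContinuousLinearMap.adjoint U) = 1)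
    (hT₂ : (1 - Complex.exp (θ * Complex.I) • ContinuousLinearMap.adjoint U) * T = 1) :
    ⟪w, T w⟫_ℂ = 1 / 2 := by
  -- Applying `U†` to the eigenvalue equation gives `(1 - e^{iθ} U†) x = 2⟪w,x⟫ w`.
  have hadj : x - (2 * ⟪w, x⟫_ℂ) • w
      = Complex.exp (θ * Complex.I) • ContinuousLinearMap.adjoint U x := by
    have hUU : ContinuousLinearMap.adjoint U * U = 1 := (Unitary.mem_iff.mp hU).1
    have h := congrArg (ContinuousLinearMap.adjoint U) hx
    rwa [← mul_apply_eq_comp, hUU, map_smul,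
      one_apply_eq_self] at h
  have hres : (1 - Complex.exp (θ * Complex.I) • ContinuousLinearMap.adjoint U) x
      = (2 * ⟪w, x⟫_ℂ) • w := by
    simp [← hadj]
  have hxT : x = (2 * ⟪w, x⟫_ℂ) • T w := by
    rw [← map_smul, ← hres, ← mul_apply_eq_comp, hT₁,
      one_apply_eq_self]
  -- Pairing `x = 2⟪w,x⟫ T w` with `w` leaves the factor `⟪w,x⟫ ≠ 0` to cancel.
  have hinner : ⟪w, x⟫_ℂ = 2 * ⟪w, x⟫_ℂ * ⟪w, T w⟫_ℂ := by
    have h := congrArg (fun y => ⟪w, y⟫_ℂ) hxT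
    simpa only [inner_smul_right] using h
  apply mul_left_cancel₀ hwx
  linear_combination (-1 / 2 : ℂ) * hinner
end

section
/- Suppose x ∈ E and θ ∈ ℝ satisfy U(P x) = e^{iθ} x with x ≠ 0 and ⟪w, x⟫ ≠ 0, and suppose e^{iθ} ≠ e^{iν_j} for every j ∈ J. Then ∑_{j∈J} 2|⟪u_j, w⟫|² / (1 − e^{i(θ − ν_j)}) = 1. -/
/-!
Write `c = ⟪w, x⟫`. Since the `u j` are orthonormal eigenvectors of `U`, the `u j`-coordinate of
`U (x - 2c w) = e^{iθ} x` reads `e^{iν_j} (⟪u j, x⟫ - 2c ⟪u j, w⟫) = e^{iθ} ⟪u j, x⟫`, which gives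
`⟪u j, x⟫ = 2c ⟪u j, w⟫ / (1 - e^{i(θ - ν_j)})`. Substituting this into
`c = ∑ j, ⟪w, u j⟫ ⟪u j, x⟫` and cancelling `c ≠ 0` yields the identity.
-/

open scoped InnerProductSpace

/-- Let `E` be a finite-dimensional complex inner product space,
`U` a unitary operator on `E`, `w` a unit vector, `P x = x - 2⟪w,x⟫ w`, and let
`(u_j)` be a finite orthonormal basis of eigenvectors of `U`, `U u_j = e^{iν_j} u_j`.
If `U (P x) = e^{iθ} x` with `x ≠ 0`, `⟪w,x⟫ ≠ 0`, and `e^{iθ} ≠ e^{iν_j}` for all `j`,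
then `∑_j 2 |⟪u_j, w⟫|² / (1 - e^{i(θ - ν_j)}) = 1`. -/
theorem subset_finding_eigenvalue_condition_sum
    {E : Type*} [NormedAddCommGroup E] [InnerProductSpace ℂ E]
    [FiniteDimensional ℂ E]
    (U : E →L[ℂ] E) (hU : U ∈ unitary (E →L[ℂ] E))
    (w : E) (hw : ‖w‖ = 1)
    {J : Type*} [Fintype J] (u : OrthonormalBasis J ℂ E) (ν : J → ℝ)
    (hUu : ∀ j, U (u j) = Complex.exp (ν j * Complex.I) • u j)
    (x : E) (θ : ℝ) (hx0 : x ≠ 0) (hwx : ⟪w, x⟫_ℂ ≠ 0)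
    (hx : U (x - (2 * ⟪w, x⟫_ℂ) • w) = Complex.exp (θ * Complex.I) • x)
    (hθ : ∀ j, Complex.exp (θ * Complex.I) ≠ Complex.exp (ν j * Complex.I)) :
    ∑ j, 2 * (‖⟪u j, w⟫_ℂ‖ : ℂ) ^ 2 / (1 - Complex.exp ((θ - ν j) * Complex.I)) = 1 := by
  have coord : ∀ (y : E) (j : J),
      ⟪u j, U y⟫_ℂ = Complex.exp (ν j * Complex.I) * ⟪u j, y⟫_ℂ := by
    classical
    intro y j
    conv_lhs => rw [← u.sum_repr' y]
    simp [map_sum, hUu, orthonormal_iff_ite.mp u.orthonormal, mul_comm]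
  have hexp : ∀ j, Complex.exp (θ * Complex.I)
      = Complex.exp ((θ - ν j) * Complex.I) * Complex.exp (ν j * Complex.I) := by
    intro j
    rw [← Complex.exp_add]
    ring_nf
  have hne : ∀ j, 1 - Complex.exp ((θ - ν j) * Complex.I) ≠ 0 := by
    intro j h
    apply hθ j
    rw [hexp j, ← sub_eq_zero.mp h, one_mul]
  have hxj : ∀ j, ⟪u j, x⟫_ℂ * (1 - Complex.exp ((θ - ν j) * Complex.I))
      = 2 * ⟪w, x⟫_ℂ * ⟪u j, w⟫_ℂ := by
    intro j
    have h := coord (x - (2 * ⟪w, x⟫_ℂ) • w) j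
    rw [hx, inner_smul_right, inner_sub_right, inner_smul_right, hexp j] at h
    apply mul_left_cancel₀ (Complex.exp_ne_zero (ν j * Complex.I))
    linear_combination -h
  -- Parseval for `⟪w, x⟫`, with the coordinates of `x` given by `hxj`.
  have hsum : ⟪w, x⟫_ℂ * ∑ j, 2 * (‖⟪u j, w⟫_ℂ‖ : ℂ) ^ 2 /
      (1 - Complex.exp ((θ - ν j) * Complex.I)) = ⟪w, x⟫_ℂ := by
    conv_rhs => rw [← u.sum_inner_mul_inner w x]
    rw [Finset.mul_sum]
    refine Finset.sum_congr rfl fun j _ => ?_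
    have hn : ⟪w, u j⟫_ℂ * ⟪u j, w⟫_ℂ = (‖⟪u j, w⟫_ℂ‖ : ℂ) ^ 2 := by
      rw [← inner_conj_symm w (u j)]
      exact Complex.conj_mul' _
    rw [← hn, mul_div_assoc', div_eq_iff (hne j)]
    linear_combination -⟪w, u j⟫_ℂ * hxj j
  exact mul_left_cancel₀ hwx (hsum.trans (mul_one _).symm)
end

section
/- Suppose x ∈ E and θ ∈ ℝ satisfy U(P x) = e^{iθ} x with x ≠ 0 and ⟪w, x⟫ ≠ 0, and suppose e^{iθ} ≠ e^{iν_j} for every j ∈ J (so that sin((θ − ν_j)/2) ≠ 0 for all j). Then ∑_{j∈J} |⟪u_j, w⟫|² · cot((θ − ν_j)/2) = 0. -/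
/-!
Pairing `U (P x) = e^{iθ} x` with the eigenvector `u_j` gives
`e^{iν_j} (⟪u_j, x⟫ - 2 ⟪w, x⟫ ⟪u_j, w⟫) = e^{iθ} ⟪u_j, x⟫`. Since `2 / (1 - e^{iφ}) = 1 + i cot (φ/2)`,
solving with `φ = θ - ν_j` yields `⟪u_j, x⟫ = ⟪w, x⟫ ⟪u_j, w⟫ (1 + i cot ((θ - ν_j)/2))`.
Multiplying by `⟪w, u_j⟫`, summing over `j` (Parseval) and cancelling `⟪w, x⟫ ≠ 0` gives
`1 = ∑ |⟪u_j, w⟫|² + i ∑ |⟪u_j, w⟫|² cot ((θ - ν_j)/2)`, and the first sum is `‖w‖² = 1`.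
-/

open scoped InnerProductSpace

/-- The identity `2 / (1 - e^{i(t - n)}) = 1 + i cot ((t - n)/2)`, cleared of denominators. -/
lemma exp_sub_exp_mul_one_add_cot (t n : ℝ)
    (h : Complex.exp (t * Complex.I) ≠ Complex.exp (n * Complex.I)) :
    (Complex.exp (n * Complex.I) - Complex.exp (t * Complex.I)) *
      (1 + Complex.I * (Real.cot ((t - n) / 2) : ℝ)) = 2 * Complex.exp (n * Complex.I) := by
  obtain ⟨p, hp⟩ : ∃ p : ℝ, p = (t - n) / 2 := ⟨_, rfl⟩
  have ht : Complex.exp (t * Complex.I) =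
      Complex.exp (n * Complex.I) * (Complex.cos p + Complex.sin p * Complex.I) ^ 2 := by
    rw [← Complex.exp_mul_I, ← Complex.exp_nat_mul, ← Complex.exp_add, hp]
    congr 1
    push_cast
    ring
  have hsc := Complex.sin_sq_add_cos_sq (p : ℂ)
  have hs : Complex.sin p ≠ 0 := by
    intro hs
    apply h
    rw [hs] at hsc
    rw [ht, hs]
    linear_combination Complex.exp (n * Complex.I) * hsc
  rw [← hp, ht, Real.cot_eq_cos_div_sin]
  push_cast
  generalize Complex.exp (n * Complex.I) = e
  generalize Complex.sin (p : ℂ) = s at *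
  generalize Complex.cos (p : ℂ) = k at *
  have hI := Complex.I_sq
  generalize Complex.I = i at *
  have hm : (k + s * i) * (k - s * i) = 1 := by linear_combination hsc - s ^ 2 * hI
  have hc : 1 + i * (k / s) = (s + i * k) / s := by field_simp
  rw [hc, ← mul_div_assoc, div_eq_iff hs]
  -- `s + i k = i (k - s i)` and `k ± s i` are mutually inverse.
  linear_combination e * (-i * (k + s * i) * hm + ((1 - (k + s * i) ^ 2) * s - 2 * s) * hI)

/-- An orthonormal eigenbasis diagonalizes `U` also on the level of coordinates. -/
lemma inner_apply_of_eigenbasis {E : Type*} [NormedAddCommGroup E] [InnerProductSpace ℂ E]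
    (U : E →L[ℂ] E) {J : Type*} [Fintype J] (u : OrthonormalBasis J ℂ E) (μ : J → ℂ)
    (hUu : ∀ j, U (u j) = μ j • u j) (y : E) (j : J) :
    ⟪u j, U y⟫_ℂ = μ j * ⟪u j, y⟫_ℂ := by
  classical
  conv_lhs => rw [← u.sum_repr' y]
  simp [map_sum, hUu, u.inner_eq_ite, mul_comm]

/-- Let `E` be a finite-dimensional complex inner product space,
`U` a unitary operator on `E`, `w` a unit vector, `P x = x - 2⟪w,x⟫ w`, and let
`(u_j)` be a finite orthonormal basis of eigenvectors of `U`, `U u_j = e^{iν_j} u_j`.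
If `U (P x) = e^{iθ} x` with `x ≠ 0`, `⟪w,x⟫ ≠ 0`, and `e^{iθ} ≠ e^{iν_j}` for all `j`,
then `∑_j |⟪u_j, w⟫|² cot((θ - ν_j)/2) = 0`. -/
theorem subset_finding_cot_condition
    {E : Type*} [NormedAddCommGroup E] [InnerProductSpace ℂ E]
    [FiniteDimensional ℂ E]
    (U : E →L[ℂ] E) (hU : U ∈ unitary (E →L[ℂ] E))
    (w : E) (hw : ‖w‖ = 1)
    {J : Type*} [Fintype J] (u : OrthonormalBasis J ℂ E) (ν : J → ℝ)
    (hUu : ∀ j, U (u j) = Complex.exp (ν j * Complex.I) • u j)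
    (x : E) (θ : ℝ) (hx0 : x ≠ 0) (hwx : ⟪w, x⟫_ℂ ≠ 0)
    (hx : U (x - (2 * ⟪w, x⟫_ℂ) • w) = Complex.exp (θ * Complex.I) • x)
    (hθ : ∀ j, Complex.exp (θ * Complex.I) ≠ Complex.exp (ν j * Complex.I)) :
    ∑ j, ‖⟪u j, w⟫_ℂ‖ ^ 2 * Real.cot ((θ - ν j) / 2) = 0 := by
  have hcoord : ∀ j, ⟪w, u j⟫_ℂ * ⟪u j, x⟫_ℂ =
      ⟪w, x⟫_ℂ * ((‖⟪u j, w⟫_ℂ‖ ^ 2 : ℝ) +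
        Complex.I * (‖⟪u j, w⟫_ℂ‖ ^ 2 * Real.cot ((θ - ν j) / 2) : ℝ)) := by
    intro j
    have h1 := congrArg (fun y => ⟪u j, y⟫_ℂ) hx
    simp only [inner_apply_of_eigenbasis U u _ hUu, inner_sub_right, inner_smul_right] at h1
    have h2 := exp_sub_exp_mul_one_add_cot θ (ν j) (hθ j)
    have h3 : ⟪w, u j⟫_ℂ * ⟪u j, w⟫_ℂ = (‖⟪u j, w⟫_ℂ‖ : ℂ) ^ 2 := by
      rw [← inner_conj_symm w (u j), RCLike.conj_mul]
      rfl
    apply mul_left_cancel₀ (sub_ne_zero.mpr (hθ j).symm)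
    push_cast at h2 ⊢
    rw [← h3]
    linear_combination ⟪w, u j⟫_ℂ * h1 - ⟪w, x⟫_ℂ * ⟪w, u j⟫_ℂ * ⟪u j, w⟫_ℂ * h2
  have hsum := u.sum_inner_mul_inner w x
  simp only [hcoord] at hsum
  rw [← Finset.mul_sum, Finset.sum_add_distrib, ← Finset.mul_sum, ← Complex.ofReal_sum,
    ← Complex.ofReal_sum, u.sum_sq_norm_inner_right, hw] at hsum
  have h1 := mul_left_cancel₀ hwx (hsum.trans (mul_one _).symm)
  have h2 := congrArg Complex.im h1
  rwa [Complex.add_im, Complex.ofReal_im, Complex.I_mul_im, Complex.ofReal_re, Complex.one_im,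
    zero_add] at h2
end

section
/- Suppose x ∈ E and θ ∈ ℝ satisfy U(P x) = e^{iθ} x with ‖x‖ = 1 and ⟪w, x⟫ ≠ 0, and suppose e^{iθ} ≠ e^{iν_j} for every j ∈ J. Then |⟪w, x⟫|² = (1 + ∑_{j∈J} |⟪u_j, w⟫|² · cot²((θ − ν_j)/2))⁻¹. -/
/-!
Take coordinates in the eigenbasis: with `c = ⟪w, x⟫`, `a j = ⟪u j, x⟫`, `b j = ⟪u j, w⟫`, the
equation `U (P x) = e^{iθ} x` reads `e^{iν_j} (a j - 2 c b j) = e^{iθ} a j`, that is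
`(e^{iν_j} - e^{iθ}) a j = 2 c e^{iν_j} b j`. Since `|e^{iν} - e^{iθ}|² = 4 sin² ((θ - ν) / 2)`
(`norm_exp_sub_exp_sq`), which is nonzero by hypothesis, and `1 / sin² = 1 + cot²`, this gives
`|a j|² = |c|² |b j|² (1 + cot² ((θ - ν_j) / 2))`. Summing over `j` with Parseval for the unit
vectors `x` and `w` yields `1 = |c|² (1 + ∑ j, |b j|² cot² ((θ - ν_j) / 2))`.
-/

open scoped InnerProductSpace

lemma norm_exp_sub_exp_sq (θ ν : ℝ) :
    ‖Complex.exp (ν * Complex.I) - Complex.exp (θ * Complex.I)‖ ^ 2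
      = 4 * Real.sin ((θ - ν) / 2) ^ 2 := by
  have hre : (Complex.exp (ν * Complex.I) - Complex.exp (θ * Complex.I)).re
      = Real.cos ν - Real.cos θ := by
    simp [Complex.exp_ofReal_mul_I_re]
  have him : (Complex.exp (ν * Complex.I) - Complex.exp (θ * Complex.I)).im
      = Real.sin ν - Real.sin θ := by
    simp [Complex.exp_ofReal_mul_I_im]
  rw [Complex.sq_norm, Complex.normSq_apply, hre, him]
  have h1 := Real.cos_sub θ ν
  have h2 : Real.cos (θ - ν) = 1 - 2 * Real.sin ((θ - ν) / 2) ^ 2 := by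
    have h := Real.cos_two_mul ((θ - ν) / 2)
    rw [mul_div_cancel₀ (θ - ν) two_ne_zero] at h
    rw [h, Real.cos_sq']
    ring
  nlinarith [Real.sin_sq_add_cos_sq θ, Real.sin_sq_add_cos_sq ν]

lemma inner_eigenbasis_apply {E : Type*} [NormedAddCommGroup E] [InnerProductSpace ℂ E]
    {J : Type*} [Fintype J] (u : OrthonormalBasis J ℂ E) (U : E →L[ℂ] E) (μ : J → ℂ)
    (hUu : ∀ j, U (u j) = μ j • u j) (y : E) (j : J) :
    ⟪u j, U y⟫_ℂ = μ j * ⟪u j, y⟫_ℂ := by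
  classical
  conv_lhs => rw [← u.sum_repr' y]
  simp only [map_sum, map_smul, hUu, inner_sum, inner_smul_right, u.inner_eq_ite]
  simp [mul_comm]

/-- Let `E` be a finite-dimensional complex inner product space,
`U` a unitary operator on `E`, `w` a unit vector, `P x = x - 2⟪w,x⟫ w`, and let
`(u_j)` be a finite orthonormal basis of eigenvectors of `U`, `U u_j = e^{iν_j} u_j`.
If `U (P x) = e^{iθ} x` with `‖x‖ = 1`, `⟪w,x⟫ ≠ 0`, and `e^{iθ} ≠ e^{iν_j}` for all
`j`, then `|⟪w,x⟫|² = (1 + ∑_j |⟪u_j, w⟫|² cot²((θ - ν_j)/2))⁻¹`. -/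
theorem subset_finding_overlap_formula
    {E : Type*} [NormedAddCommGroup E] [InnerProductSpace ℂ E]
    [FiniteDimensional ℂ E]
    (U : E →L[ℂ] E) (hU : U ∈ unitary (E →L[ℂ] E))
    (w : E) (hw : ‖w‖ = 1)
    {J : Type*} [Fintype J] (u : OrthonormalBasis J ℂ E) (ν : J → ℝ)
    (hUu : ∀ j, U (u j) = Complex.exp (ν j * Complex.I) • u j)
    (x : E) (θ : ℝ) (hx1 : ‖x‖ = 1) (hwx : ⟪w, x⟫_ℂ ≠ 0)
    (hx : U (x - (2 * ⟪w, x⟫_ℂ) • w) = Complex.exp (θ * Complex.I) • x)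
    (hθ : ∀ j, Complex.exp (θ * Complex.I) ≠ Complex.exp (ν j * Complex.I)) :
    ‖⟪w, x⟫_ℂ‖ ^ 2
      = (1 + ∑ j, ‖⟪u j, w⟫_ℂ‖ ^ 2 * Real.cot ((θ - ν j) / 2) ^ 2)⁻¹ := by
  have key : ∀ j, ‖⟪u j, x⟫_ℂ‖ ^ 2 = ‖⟪w, x⟫_ℂ‖ ^ 2 *
      (‖⟪u j, w⟫_ℂ‖ ^ 2 + ‖⟪u j, w⟫_ℂ‖ ^ 2 * Real.cot ((θ - ν j) / 2) ^ 2) := by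
    intro j
    have h := congrArg (fun y => ⟪u j, y⟫_ℂ) hx
    simp only [inner_eigenbasis_apply u U _ hUu, inner_sub_right, inner_smul_right] at h
    have h2 : (Complex.exp (ν j * Complex.I) - Complex.exp (θ * Complex.I)) * ⟪u j, x⟫_ℂ
        = Complex.exp (ν j * Complex.I) * (2 * ⟪w, x⟫_ℂ * ⟪u j, w⟫_ℂ) := by
      linear_combination h
    have h3 := congrArg (fun z : ℂ => ‖z‖ ^ 2) h2
    simp only [norm_mul, mul_pow, norm_exp_sub_exp_sq, Complex.norm_exp_ofReal_mul_I,
      Complex.norm_ofNat] at h3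
    have hs : Real.sin ((θ - ν j) / 2) ≠ 0 := by
      intro h0
      have h4 := norm_exp_sub_exp_sq θ (ν j)
      rw [h0] at h4
      have h5 : Complex.exp (ν j * Complex.I) - Complex.exp (θ * Complex.I) = 0 := by
        simpa using h4
      exact hθ j (sub_eq_zero.mp h5).symm
    rw [Real.cot_eq_cos_div_sin, div_pow, Real.cos_sq']
    field_simp
    linear_combination h3 / 4
  have hsum : (1 : ℝ) = ‖⟪w, x⟫_ℂ‖ ^ 2 *
      (1 + ∑ j, ‖⟪u j, w⟫_ℂ‖ ^ 2 * Real.cot ((θ - ν j) / 2) ^ 2) := by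
    have px := u.sum_sq_norm_inner_right x
    have pw := u.sum_sq_norm_inner_right w
    rw [hx1, one_pow] at px
    rw [hw, one_pow] at pw
    rw [Finset.sum_congr rfl fun j _ => key j, ← Finset.mul_sum, Finset.sum_add_distrib, pw] at px
    exact px.symm
  exact eq_inv_of_mul_eq_one_left hsum.symm
end

section
/- Suppose x ∈ E and θ ∈ ℝ satisfy U(P x) = e^{iθ} x, and suppose e^{iθ} ≠ e^{iν_j} for every j ∈ J. Then for every j ∈ J, ⟪u_j, x⟫ = ⟪w, x⟫ · ⟪u_j, w⟫ · (1 + i·cot((θ − ν_j)/2)). -/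
open scoped InnerProductSpace

/-!
Since `U` preserves inner products and `U u_j = e^{iν_j} u_j`, pairing `U (P x) = e^{iθ} x` with
`u_j` gives `e^{iν_j} (⟪u_j, x⟫ - 2 ⟪w, x⟫ ⟪u_j, w⟫) = e^{iθ} ⟪u_j, x⟫`. With `δ = θ - ν_j`,
dividing by `e^{iν_j}` yields `⟪u_j, x⟫ (1 - e^{iδ}) = 2 ⟪w, x⟫ ⟪u_j, w⟫`, and
`2 / (1 - e^{iδ}) = 1 + i cot (δ / 2)`.
-/

/-- The cleared-denominator form of `1 + i cot (δ / 2) = 2 / (1 - e^{iδ})`. -/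
lemma one_add_I_mul_cot_half (δ : ℝ) (h : Complex.exp (δ * Complex.I) ≠ 1) :
    (1 + Complex.I * (Real.cot (δ / 2) : ℂ)) * (1 - Complex.exp (δ * Complex.I)) = 2 := by
  have h' : 1 - Complex.exp (δ * Complex.I) ≠ 0 := sub_ne_zero.mpr h.symm
  have e : 2 * Complex.I * ((δ / 2 : ℝ) : ℂ) = δ * Complex.I := by push_cast; ring
  rw [Complex.ofReal_cot, Complex.cot_eq_exp_ratio, e]
  generalize Complex.exp (δ * Complex.I) = z at h'
  field_simp
  ring

/-- A unitary operator acts on the coefficient along an eigenvector by the eigenvalue. -/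
lemma inner_unitary_apply_of_eigenvector
    {E : Type*} [NormedAddCommGroup E] [InnerProductSpace ℂ E] [CompleteSpace E]
    (U : E →L[ℂ] E) (hU : U ∈ unitary (E →L[ℂ] E)) (v y : E) (ν : ℝ)
    (hv : U v = Complex.exp (ν * Complex.I) • v) :
    ⟪v, U y⟫_ℂ = Complex.exp (ν * Complex.I) * ⟪v, y⟫_ℂ := by
  have h : ⟪U v, U y⟫_ℂ = ⟪v, y⟫_ℂ := ContinuousLinearMap.inner_map_map_of_mem_unitary hU v y
  rw [hv, inner_smul_left, ← Complex.exp_conj] at h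
  rw [← h, ← mul_assoc, ← Complex.exp_add]
  simp

/-- Let `E` be a finite-dimensional complex inner product space,
`U` a unitary operator on `E`, `w` a unit vector, `P x = x - 2⟪w,x⟫ w`, and let
`(u_j)` be a finite orthonormal basis of eigenvectors of `U`, `U u_j = e^{iν_j} u_j`.
If `U (P x) = e^{iθ} x` and `e^{iθ} ≠ e^{iν_j}` for all `j`, then for every `j`,
`⟪u_j, x⟫ = ⟪w,x⟫ ⟪u_j,w⟫ (1 + i cot((θ - ν_j)/2))`. -/
theorem subset_finding_eigenstate_overlap
    {E : Type*} [NormedAddCommGroup E] [InnerProductSpace ℂ E]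
    [FiniteDimensional ℂ E]
    (U : E →L[ℂ] E) (hU : U ∈ unitary (E →L[ℂ] E))
    (w : E) (hw : ‖w‖ = 1)
    {J : Type*} [Fintype J] (u : OrthonormalBasis J ℂ E) (ν : J → ℝ)
    (hUu : ∀ j, U (u j) = Complex.exp (ν j * Complex.I) • u j)
    (x : E) (θ : ℝ)
    (hx : U (x - (2 * ⟪w, x⟫_ℂ) • w) = Complex.exp (θ * Complex.I) • x)
    (hθ : ∀ j, Complex.exp (θ * Complex.I) ≠ Complex.exp (ν j * Complex.I)) :
    ∀ j, ⟪u j, x⟫_ℂ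
      = ⟪w, x⟫_ℂ * ⟪u j, w⟫_ℂ
          * (1 + Complex.I * (Real.cot ((θ - ν j) / 2) : ℂ)) := by
  intro j
  have h := congrArg (fun z => ⟪u j, z⟫_ℂ) hx
  simp only [inner_unitary_apply_of_eigenvector U hU (u j) _ (ν j) (hUu j), inner_sub_right,
    inner_smul_right] at h
  have hexp : Complex.exp (θ * Complex.I)
      = Complex.exp (ν j * Complex.I) * Complex.exp (((θ - ν j : ℝ) : ℂ) * Complex.I) := by
    rw [← Complex.exp_add]
    congr 1
    push_cast
    ring
  have hne : Complex.exp (((θ - ν j : ℝ) : ℂ) * Complex.I) ≠ 1 := by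
    intro h1
    exact hθ j (by rw [hexp, h1, mul_one])
  have hcot := one_add_I_mul_cot_half (θ - ν j) hne
  rw [hexp, mul_assoc (Complex.exp _) (Complex.exp _)] at h
  have h2 := mul_left_cancel₀ (Complex.exp_ne_zero _) h
  apply mul_right_cancel₀ (sub_ne_zero.mpr hne.symm)
  linear_combination h2 - ⟪w, x⟫_ℂ * ⟪u j, w⟫_ℂ * hcot
end

section
/- Let N, M be integers with L ≤ M and M ≤ N − L, and set α = 1/(N−M) and β = 1/(M+1). Define c_{j,0} = C(N−L, M−j)·C(L, j)·((N−L) − (M−j)) for 0 ≤ j ≤ L and c_{j,1} = C(N−L, M−j)·C(L, j)·(L−j) for 0 ≤ j ≤ L−1, where C(a, b) denotes the binomial coefficient. Then the vector u = ∑_{j,p} √(c_{j,p}) e_{j,p} ∈ E is nonzero and satisfies C₁ u = u and V u = u; in particular W u = u, i.e., u is an eigenvector of W with eigenvalue 1. -/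
/-!
Both `C₁` and `V` are block diagonal, with blocks the reflections
`!![1 - 2x, 2√(x(1-x)); 2√(x(1-x)), 2x - 1]` fixing `(√(1-x), √x)`, together with one
`1 × 1` block equal to `1`. It therefore suffices that each pair of coordinates of `u`
belonging to a block is proportional to `(√(1-x), √x)`, which is `reflect_fst` and `reflect_snd`.

For `C₁` the block `{e_{j,0}, e_{j,1}}` has `x = (L-j)/(N-M)`, and `c_{j,0}`, `c_{j,1}` visibly
share the factor `C(N-L, M-j) C(L, j)`, with cofactors summing to `N - M`.
For `V` the block `{e_{j+1,0}, e_{j,1}}` has `x = (j+1)/(M+1)`, and the absorption identity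
`C(n, k+1) (k+1) = C(n, k) (n-k)`, applied to both binomial coefficients, gives
`c_{j+1,0} = K (M-j)` and `c_{j,1} = K (j+1)` with `K = C(N-L, M-j) C(L, j+1)`.
-/

/-- Index type for the `(2L+1)`-dimensional invariant subspace: `Sum.inl j`
corresponds to the basis vector `e_{j,0}` (`0 ≤ j ≤ L`) and `Sum.inr j` to
`e_{j,1}` (`0 ≤ j ≤ L-1`). -/
abbrev WalkIx (L : ℕ) := Fin (L + 1) ⊕ Fin L

/-- The coin matrix `C₁` of Ambainis's quantum walk restricted to its
`(2L+1)`-dimensional invariant subspace. -/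
noncomputable def C1mat (L : ℕ) (α : ℝ) : Matrix (WalkIx L) (WalkIx L) ℂ :=
  fun r c =>
    match r, c with
    | Sum.inl j, Sum.inl j' =>
        if j = j' then ((1 - 2 * α * ((L : ℝ) - (j : ℕ))) : ℝ) else 0
    | Sum.inl j, Sum.inr j' =>
        if (j : ℕ) = (j' : ℕ) then
          ((2 * Real.sqrt (α * ((L : ℝ) - (j : ℕ)) * (1 - α * ((L : ℝ) - (j : ℕ))))) : ℝ)
        else 0
    | Sum.inr j, Sum.inl j' =>
        if (j : ℕ) = (j' : ℕ) then
          ((2 * Real.sqrt (α * ((L : ℝ) - (j' : ℕ)) * (1 - α * ((L : ℝ) - (j' : ℕ))))) : ℝ)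
        else 0
    | Sum.inr j, Sum.inr j' =>
        if j = j' then ((2 * α * ((L : ℝ) - (j : ℕ)) - 1) : ℝ) else 0

/-- The matrix `V = S C₂ S` of Ambainis's quantum walk restricted to its
`(2L+1)`-dimensional invariant subspace. -/
noncomputable def Vmat (L : ℕ) (β : ℝ) : Matrix (WalkIx L) (WalkIx L) ℂ :=
  fun r c =>
    match r, c with
    | Sum.inl j, Sum.inl j' =>
        if j = j' then ((1 - 2 * β * (j : ℕ)) : ℝ) else 0
    | Sum.inl j, Sum.inr j' =>
        if (j : ℕ) = (j' : ℕ) + 1 then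
          ((2 * Real.sqrt (β * (j : ℕ) * (1 - β * (j : ℕ)))) : ℝ)
        else 0
    | Sum.inr j, Sum.inl j' =>
        if (j' : ℕ) = (j : ℕ) + 1 then
          ((2 * Real.sqrt (β * (j' : ℕ) * (1 - β * (j' : ℕ)))) : ℝ)
        else 0
    | Sum.inr j, Sum.inr j' =>
        if j = j' then ((2 * β * ((j : ℕ) + 1) - 1) : ℝ) else 0

/-- One step `W = V C₁` of Ambainis's quantum walk restricted to its
`(2L+1)`-dimensional invariant subspace. -/
noncomputable def Wmat (L : ℕ) (α β : ℝ) : Matrix (WalkIx L) (WalkIx L) ℂ :=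
  Vmat L β * C1mat L α


/-- First coordinate of the fixed-vector equation for the reflection with parameter `x = b / D`,
where `a + b = D`. -/
lemma reflect_fst {K a b D x : ℝ} (hK : 0 ≤ K) (ha : 0 ≤ a) (hb : 0 ≤ b) (hD : 0 < D)
    (hab : a + b = D) (hx : x = b / D) :
    (1 - 2 * x) * √(K * a) + 2 * √(x * (1 - x)) * √(K * b) = √(K * a) := by
  have h1 : x * (1 - x) = (a * b) / D ^ 2 := by
    subst hx hab
    field_simp
    ring
  rw [h1, Real.sqrt_div (by positivity), Real.sqrt_sq hD.le, Real.sqrt_mul ha,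
    Real.sqrt_mul hK, Real.sqrt_mul hK, hx]
  have h2 := Real.mul_self_sqrt hb
  field_simp
  linear_combination 2 * √K * √a * h2

/-- Second coordinate of the fixed-vector equation for the reflection with parameter `x = b / D`,
where `a + b = D`. -/
lemma reflect_snd {K a b D x : ℝ} (hK : 0 ≤ K) (ha : 0 ≤ a) (hb : 0 ≤ b) (hD : 0 < D)
    (hab : a + b = D) (hx : x = b / D) :
    2 * √(x * (1 - x)) * √(K * a) + (2 * x - 1) * √(K * b) = √(K * b) := by
  have h := reflect_fst (x := 1 - x) hK hb ha hD (by linarith)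
    (by subst hx hab; field_simp; ring)
  rw [show (1 - x) * (1 - (1 - x)) = x * (1 - x) by ring] at h
  linarith

/-- `C₁` fixes a vector whose coordinates on the `j`-th block share a factor `K j` with
cofactors `a j` and `L - j` summing to `D = 1 / α`. -/
lemma C1mat_mulVec_eq (L : ℕ) (D : ℝ) (hD : 0 < D) (K a : ℕ → ℝ)
    (hK : ∀ j ≤ L, 0 ≤ K j) (ha : ∀ j ≤ L, 0 ≤ a j)
    (hab : ∀ j ≤ L, a j + ((L : ℝ) - j) = D) (f g : ℕ → ℝ)
    (hf : ∀ j ≤ L, f j = √(K j * a j)) (hg : ∀ j < L, g j = √(K j * ((L : ℝ) - j))) :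
    (C1mat L (1 / D)).mulVec
        (Sum.elim (fun j : Fin (L + 1) => (f j : ℂ)) (fun j : Fin L => (g j : ℂ))) =
      Sum.elim (fun j : Fin (L + 1) => (f j : ℂ)) (fun j : Fin L => (g j : ℂ)) := by
  funext r
  rcases r with ⟨j, hj⟩ | ⟨j, hj⟩
  · simp only [Matrix.mulVec, dotProduct, Fintype.sum_sum_type, C1mat, Sum.elim_inl,
      Sum.elim_inr, ite_mul, zero_mul, Finset.sum_ite_eq, Finset.mem_univ, if_true]
    rcases Nat.lt_succ_iff_lt_or_eq.mp hj with h | rfl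
    · rw [Finset.sum_eq_single (⟨j, h⟩ : Fin L)
        (fun b _ hb => if_neg fun h' => hb (Fin.ext h'.symm)) (by simp), if_pos rfl]
      have hb : (0 : ℝ) ≤ (L : ℝ) - j := sub_nonneg.mpr (by exact_mod_cast h.le)
      have key := reflect_fst (x := 1 / D * ((L : ℝ) - j)) (hK j h.le) (ha j h.le) hb hD
        (hab j h.le) (by ring)
      rw [← hf j h.le, ← hg j h, ← mul_assoc] at key
      exact_mod_cast key
    · rw [Finset.sum_eq_zero fun b _ => if_neg b.2.ne']
      simp
  · simp only [Matrix.mulVec, dotProduct, Fintype.sum_sum_type, C1mat, Sum.elim_inl,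
      Sum.elim_inr, ite_mul, zero_mul, Finset.sum_ite_eq, Finset.mem_univ, if_true]
    rw [Finset.sum_eq_single (⟨j, by omega⟩ : Fin (L + 1))
      (fun b _ hb => if_neg fun h' => hb (Fin.ext h'.symm)) (by simp), if_pos rfl]
    have hb : (0 : ℝ) ≤ (L : ℝ) - j := sub_nonneg.mpr (by exact_mod_cast hj.le)
    have key := reflect_snd (x := 1 / D * ((L : ℝ) - j)) (hK j hj.le) (ha j hj.le) hb hD
      (hab j hj.le) (by ring)
    rw [← hf j hj.le, ← hg j hj, ← mul_assoc] at key
    exact_mod_cast key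

/-- `V` fixes a vector whose coordinates at `e_{j+1,0}` and `e_{j,1}` share a factor `K j` with
cofactors `a j` and `j + 1` summing to `D = 1 / β`. -/
lemma Vmat_mulVec_eq (L : ℕ) (D : ℝ) (hD : 0 < D) (K a : ℕ → ℝ)
    (hK : ∀ j < L, 0 ≤ K j) (ha : ∀ j < L, 0 ≤ a j)
    (hab : ∀ j < L, a j + ((j + 1 : ℕ) : ℝ) = D) (f g : ℕ → ℝ)
    (hf : ∀ j < L, f (j + 1) = √(K j * a j))
    (hg : ∀ j < L, g j = √(K j * ((j + 1 : ℕ) : ℝ))) :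
    (Vmat L (1 / D)).mulVec
        (Sum.elim (fun j : Fin (L + 1) => (f j : ℂ)) (fun j : Fin L => (g j : ℂ))) =
      Sum.elim (fun j : Fin (L + 1) => (f j : ℂ)) (fun j : Fin L => (g j : ℂ)) := by
  funext r
  rcases r with ⟨j, hj⟩ | ⟨j, hj⟩
  · simp only [Matrix.mulVec, dotProduct, Fintype.sum_sum_type, Vmat, Sum.elim_inl,
      Sum.elim_inr, ite_mul, zero_mul, Finset.sum_ite_eq, Finset.mem_univ, if_true]
    rcases j with _ | j
    · rw [Finset.sum_eq_zero fun b _ => if_neg (Nat.succ_ne_zero _).symm]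
      simp
    · have h : j < L := by omega
      rw [Finset.sum_eq_single (⟨j, h⟩ : Fin L)
        (fun b _ hb => if_neg fun h' => hb (Fin.ext (Nat.succ_injective h').symm)) (by simp),
        if_pos rfl]
      have key := reflect_fst (x := 1 / D * ((j + 1 : ℕ) : ℝ)) (hK j h) (ha j h)
        (Nat.cast_nonneg _) hD (hab j h) (by ring)
      rw [← hf j h, ← hg j h, ← mul_assoc] at key
      exact_mod_cast key
  · simp only [Matrix.mulVec, dotProduct, Fintype.sum_sum_type, Vmat, Sum.elim_inl,
      Sum.elim_inr, ite_mul, zero_mul, Finset.sum_ite_eq, Finset.mem_univ, if_true]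
    rw [Finset.sum_eq_single (⟨j + 1, by omega⟩ : Fin (L + 1))
      (fun b _ hb => if_neg fun h' => hb (Fin.ext h')) (by simp), if_pos rfl]
    have key := reflect_snd (x := 1 / D * ((j + 1 : ℕ) : ℝ)) (hK j hj) (ha j hj)
      (Nat.cast_nonneg _) hD (hab j hj) (by ring)
    rw [← hf j hj, ← hg j hj, ← mul_assoc] at key
    exact_mod_cast key

/-- For `α = 1/(N-M)`, `β = 1/(M+1)`, the (unnormalized)
uniform-superposition vector `u = ∑_{j,p} √(c_{j,p}) e_{j,p}`, with
`c_{j,0} = C(N-L, M-j) C(L, j) ((N-L)-(M-j))` and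
`c_{j,1} = C(N-L, M-j) C(L, j) (L-j)`, is a nonzero vector fixed by `C₁` and by
`V`, hence an eigenvector of `W = V C₁` with eigenvalue `1`. -/
theorem walk_fixed_vector (L : ℕ) (hL : 1 ≤ L) (N M : ℕ)
    (hLM : L ≤ M) (hMN : (M : ℤ) ≤ (N : ℤ) - (L : ℤ)) :
    let α : ℝ := 1 / ((N : ℝ) - (M : ℝ))
    let β : ℝ := 1 / ((M : ℝ) + 1)
    let u : WalkIx L → ℂ := Sum.elim
      (fun j => ((Real.sqrt (((N - L).choose (M - (j : ℕ)) * L.choose (j : ℕ)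
          * ((N - L) - (M - (j : ℕ))) : ℕ)) : ℝ) : ℂ))
      (fun j => ((Real.sqrt (((N - L).choose (M - (j : ℕ)) * L.choose (j : ℕ)
          * (L - (j : ℕ)) : ℕ)) : ℝ) : ℂ))
    u ≠ 0 ∧ (C1mat L α).mulVec u = u ∧ (Vmat L β).mulVec u = u
      ∧ (Wmat L α β).mulVec u = u := by
  intro α β u
  have hN : L + M ≤ N := by omega
  have hC : (C1mat L α).mulVec u = u := by
    refine C1mat_mulVec_eq L ((N : ℝ) - M) ?_
      (fun j => ((N - L).choose (M - j) * L.choose j : ℕ))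
      (fun j => (((N - L) - (M - j) : ℕ) : ℝ))
      (fun _ _ => Nat.cast_nonneg _) (fun _ _ => Nat.cast_nonneg _) ?_
      (fun j => √((((N - L).choose (M - j) * L.choose j * ((N - L) - (M - j)) : ℕ) : ℝ)))
      (fun j => √((((N - L).choose (M - j) * L.choose j * (L - j) : ℕ) : ℝ))) ?_ ?_
    · exact sub_pos.mpr (by exact_mod_cast (by omega : M < N))
    · intro j hj
      have h : ((N - L) - (M - j)) + L + M = N + j := by omega
      have h' : ((((N - L) - (M - j) : ℕ) : ℝ)) + L + M = N + j := by exact_mod_cast h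
      linarith
    · intro j _
      rw [Nat.cast_mul]
    · intro j hj
      rw [Nat.cast_mul, Nat.cast_sub hj.le]
  have hV : (Vmat L β).mulVec u = u := by
    refine Vmat_mulVec_eq L ((M : ℝ) + 1) (by positivity)
      (fun j => ((N - L).choose (M - j) * L.choose (j + 1) : ℕ))
      (fun j => ((M - j : ℕ) : ℝ))
      (fun _ _ => Nat.cast_nonneg _) (fun _ _ => Nat.cast_nonneg _) ?_
      (fun j => √((((N - L).choose (M - j) * L.choose j * ((N - L) - (M - j)) : ℕ) : ℝ)))
      (fun j => √((((N - L).choose (M - j) * L.choose j * (L - j) : ℕ) : ℝ))) ?_ ?_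
    · intro j hj
      have h : (M - j) + (j + 1) = M + 1 := by omega
      exact_mod_cast h
    · intro j hj
      have h := Nat.choose_succ_right_eq (N - L) (M - (j + 1))
      rw [show M - (j + 1) + 1 = M - j by omega] at h
      rw [← Nat.cast_mul]
      congr 2
      linear_combination L.choose (j + 1) * h.symm
    · intro j hj
      have h := Nat.choose_succ_right_eq L j
      rw [← Nat.cast_mul]
      congr 2
      linear_combination (N - L).choose (M - j) * h.symm
  refine ⟨fun h0 => ?_, hC, hV, ?_⟩
  -- The coordinate at `e_{L,0}` is the square root of `C(N-L, M-L) (N-M) > 0`.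
  · have h := congrFun h0 (Sum.inl (Fin.last L))
    have hpos : 0 < (N - L).choose (M - L) * L.choose L * ((N - L) - (M - L)) :=
      Nat.mul_pos (Nat.mul_pos (Nat.choose_pos (by omega)) (by simp)) (by omega)
    have hs : (0 : ℝ) < √(((N - L).choose (M - L) * L.choose L * ((N - L) - (M - L)) : ℕ)) :=
      Real.sqrt_pos.mpr (by exact_mod_cast hpos)
    exact hs.ne' (Complex.ofReal_eq_zero.mp h)
  · rw [Wmat, ← Matrix.mulVec_mulVec, hC, hV]
end

section
/- Let C be the diagonal matrix on E with C e_{j,p} = (−1)^p e_{j,p}. Then the operator norms (with respect to the ℓ² norm on E) of the differences satisfy ‖C₁ − C‖ = 2√(Lα) and ‖V − C‖ = 2√(Lβ). -/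
/-- The diagonal matrix `C` with `C e_{j,p} = (-1)^p e_{j,p}`. -/
noncomputable def Cdiag (L : ℕ) : Matrix (WalkIx L) (WalkIx L) ℂ :=
  Matrix.diagonal (Sum.elim (fun _ => (1 : ℂ)) (fun _ => (-1 : ℂ)))

/-- The common form of `C₁ - C` and `V - C`: `f` pairs the index `inr j` with `inl (f j)`, and on
this pair the matrix is the real symmetric block of weight `a (f j)` with diagonal `∓2a` and
off-diagonal entries `2√(a(1-a))`. -/
noncomputable def coinDiff {m n : Type*} [DecidableEq m] [DecidableEq n] (f : n → m) (a : m → ℝ) :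
    Matrix (m ⊕ n) (m ⊕ n) ℂ :=
  Matrix.fromBlocks
    (Matrix.diagonal fun i => ((-(2 * a i) : ℝ) : ℂ))
    (Matrix.of fun i j => if i = f j then ((2 * Real.sqrt (a i * (1 - a i)) : ℝ) : ℂ) else 0)
    (Matrix.of fun j i => if i = f j then ((2 * Real.sqrt (a i * (1 - a i)) : ℝ) : ℂ) else 0)
    (Matrix.diagonal fun j => ((2 * a (f j) : ℝ) : ℂ))

lemma coinDiff_conjTranspose {m n : Type*} [DecidableEq m] [DecidableEq n] (f : n → m)
    (a : m → ℝ) : (coinDiff f a).conjTranspose = coinDiff f a := by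
  ext r c
  rcases r with i | i <;> rcases c with k | k
  · by_cases h : i = k
    · subst h; simp [coinDiff]
    · simp [coinDiff, h, Ne.symm h]
  · by_cases h : i = f k <;> simp [coinDiff, h]
  · by_cases h : k = f i <;> simp [coinDiff, h]
  · by_cases h : i = k
    · subst h; simp [coinDiff]
    · simp [coinDiff, h, Ne.symm h]

lemma coinDiff_mul_self {m n : Type*} [Fintype m] [Fintype n] [DecidableEq m] [DecidableEq n]
    (f : n → m) (hf : Function.Injective f) (a : m → ℝ) (ha0 : ∀ i, 0 ≤ a i) (ha1 : ∀ i, a i ≤ 1)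
    (hz : ∀ i, i ∉ Set.range f → a i = 0) :
    coinDiff f a * coinDiff f a
      = Matrix.diagonal (Sum.elim (fun i => ((4 * a i : ℝ) : ℂ))
          (fun j => ((4 * a (f j) : ℝ) : ℂ))) := by
  have hs : ∀ i, ((Real.sqrt (a i * (1 - a i)) : ℝ) : ℂ) * ((Real.sqrt (a i * (1 - a i)) : ℝ) : ℂ)
      = (a i : ℂ) * (1 - a i) := by
    intro i
    have := Real.mul_self_sqrt (mul_nonneg (ha0 i) (sub_nonneg.2 (ha1 i)))
    exact_mod_cast congrArg (fun x : ℝ => (x : ℂ)) this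
  ext r c
  rw [Matrix.mul_apply, Fintype.sum_sum_type]
  rcases r with i | i <;> rcases c with k | k
  · by_cases hi : i ∈ Set.range f
    · obtain ⟨j, rfl⟩ := hi
      by_cases h : f j = k
      · subst h
        simp [coinDiff, Matrix.diagonal_apply, hf.eq_iff]
        linear_combination 4 * hs (f j)
      · simp [coinDiff, Matrix.diagonal_apply, hf.eq_iff, h]
        refine Finset.sum_eq_zero fun x _ => ?_
        split_ifs with h1 h2
        · exact absurd (h2 ▸ h1).symm h
        · rfl
        · rfl
    · have hne : ∀ j, i ≠ f j := fun j hj => hi ⟨j, hj.symm⟩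
      simp [coinDiff, Matrix.diagonal_apply, hne, hz i hi]
  · by_cases h : i = f k
    · subst h
      simp [coinDiff, Matrix.diagonal_apply]
      ring
    · simp [coinDiff, Matrix.diagonal_apply, h]
  · by_cases h : k = f i
    · subst h
      simp [coinDiff, Matrix.diagonal_apply, hf.eq_iff]
      ring
    · simp [coinDiff, Matrix.diagonal_apply, h]
      refine Finset.sum_eq_zero fun x _ => ?_
      split_ifs with h1 h2
      · exact absurd (h2 ▸ h1) h
      · rfl
      · rfl
  · by_cases h : i = k
    · subst h
      simp [coinDiff, Matrix.diagonal_apply]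
      linear_combination 4 * hs (f i)
    · simp [coinDiff, Matrix.diagonal_apply, hf.eq_iff, h, Ne.symm h]

open scoped Matrix.Norms.L2Operator in
/-- The C⋆-identity reduces the operator norm to the maximal entry of the diagonal matrix
`coinDiff f a * coinDiff f a`. -/
lemma norm_coinDiff {m n : Type*} [Fintype m] [Fintype n] [DecidableEq m] [DecidableEq n]
    (f : n → m) (hf : Function.Injective f) (a : m → ℝ) (ha0 : ∀ i, 0 ≤ a i) (ha1 : ∀ i, a i ≤ 1)
    (hz : ∀ i, i ∉ Set.range f → a i = 0) (M : ℝ) (hM : ∀ i, a i ≤ M) (k : m) (hk : a k = M) :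
    ‖Matrix.toEuclideanCLM (𝕜 := ℂ) (coinDiff f a)‖ = 2 * Real.sqrt M := by
  have hM0 : 0 ≤ M := hk ▸ ha0 k
  have h1 := Matrix.l2_opNorm_conjTranspose_mul_self (coinDiff f a)
  rw [coinDiff_conjTranspose, coinDiff_mul_self f hf a ha0 ha1 hz, Matrix.l2_opNorm_diagonal] at h1
  have h2 : ‖(Sum.elim (fun i => ((4 * a i : ℝ) : ℂ)) (fun j => ((4 * a (f j) : ℝ) : ℂ)) :
      m ⊕ n → ℂ)‖ = 4 * M := by
    apply le_antisymm
    · rw [pi_norm_le_iff_of_nonneg (by positivity)]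
      rintro (i | j)
      · rw [Sum.elim_inl, Complex.norm_real, Real.norm_of_nonneg (by linarith [ha0 i])]
        linarith [hM i]
      · rw [Sum.elim_inr, Complex.norm_real, Real.norm_of_nonneg (by linarith [ha0 (f j)])]
        linarith [hM (f j)]
    · refine le_trans (le_of_eq ?_) (norm_le_pi_norm _ (Sum.inl k))
      rw [Sum.elim_inl, Complex.norm_real, hk, Real.norm_of_nonneg (by linarith)]
  rw [h2] at h1
  change ‖coinDiff f a‖ = _
  rw [← mul_self_inj_of_nonneg (norm_nonneg _) (by positivity), ← h1]
  linear_combination (-4) * Real.mul_self_sqrt hM0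

lemma C1mat_sub_Cdiag (L : ℕ) (α : ℝ) :
    C1mat L α - Cdiag L
      = coinDiff (Fin.castSucc : Fin L → Fin (L + 1)) (fun i => α * ((L : ℝ) - (i : ℕ))) := by
  ext r c
  rcases r with i | i <;> rcases c with k | k
  · by_cases h : i = k
    · subst h
      simp [C1mat, Cdiag, coinDiff]
      ring
    · simp [C1mat, Cdiag, coinDiff, h]
  · simp [C1mat, Cdiag, coinDiff, Fin.ext_iff]
  · simp [C1mat, Cdiag, coinDiff, Fin.ext_iff, eq_comm]
  · by_cases h : i = k
    · subst h
      simp [C1mat, Cdiag, coinDiff]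
      ring
    · simp [C1mat, Cdiag, coinDiff, h]

lemma Vmat_sub_Cdiag (L : ℕ) (β : ℝ) :
    Vmat L β - Cdiag L
      = coinDiff (Fin.succ : Fin L → Fin (L + 1)) (fun i => β * ((i : ℕ) : ℝ)) := by
  ext r c
  rcases r with i | i <;> rcases c with k | k
  · by_cases h : i = k
    · subst h
      simp [Vmat, Cdiag, coinDiff]
      ring
    · simp [Vmat, Cdiag, coinDiff, h]
  · have h : i = k.succ ↔ (i : ℕ) = (k : ℕ) + 1 := by rw [Fin.ext_iff, Fin.val_succ]
    simp [Vmat, Cdiag, coinDiff, h]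
  · have h : k = i.succ ↔ (k : ℕ) = (i : ℕ) + 1 := by rw [Fin.ext_iff, Fin.val_succ]
    simp [Vmat, Cdiag, coinDiff, h]
  · by_cases h : i = k
    · subst h
      simp [Vmat, Cdiag, coinDiff]
      ring
    · simp [Vmat, Cdiag, coinDiff, h]

/-- The `ℓ²` operator norms of the differences `C₁ - C` and
`V - C` are `‖C₁ - C‖ = 2√(Lα)` and `‖V - C‖ = 2√(Lβ)`. -/
theorem perturbation_norms (L : ℕ) (hL : 1 ≤ L) (α β : ℝ)
    (hα : 0 < α) (hβ : 0 < β) (hLα : (L : ℝ) * α ≤ 1) (hLβ : (L : ℝ) * β ≤ 1) :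
    ‖Matrix.toEuclideanCLM (𝕜 := ℂ) (C1mat L α - Cdiag L)‖
        = 2 * Real.sqrt ((L : ℝ) * α)
    ∧ ‖Matrix.toEuclideanCLM (𝕜 := ℂ) (Vmat L β - Cdiag L)‖
        = 2 * Real.sqrt ((L : ℝ) * β) := by
  have hle : ∀ i : Fin (L + 1), ((i : ℕ) : ℝ) ≤ L := fun i => by
    exact_mod_cast Nat.lt_succ_iff.1 i.2
  have hge : ∀ i : Fin (L + 1), (0 : ℝ) ≤ ((i : ℕ) : ℝ) := fun i => Nat.cast_nonneg _
  have hA : ∀ i : Fin (L + 1), α * ((L : ℝ) - (i : ℕ)) ≤ L * α := fun i => by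
    nlinarith [hge i]
  have hB : ∀ i : Fin (L + 1), β * ((i : ℕ) : ℝ) ≤ L * β := fun i => by
    nlinarith [hle i]
  constructor
  · rw [C1mat_sub_Cdiag]
    refine norm_coinDiff _ (Fin.castSucc_injective L) _
      (fun i => mul_nonneg hα.le (sub_nonneg.2 (hle i))) (fun i => (hA i).trans hLα) ?_ _ hA 0 ?_
    · intro i hi
      -- The only index outside the range of `castSucc` is `L`, where the weight vanishes.
      induction i using Fin.lastCases with
      | last => simp
      | cast j => exact absurd ⟨j, rfl⟩ hi
    · simp [mul_comm]
  · rw [Vmat_sub_Cdiag]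
    refine norm_coinDiff _ (Fin.succ_injective L) _
      (fun i => mul_nonneg hβ.le (hge i)) (fun i => (hB i).trans hLβ) ?_ _ hB (Fin.last L) ?_
    · intro i hi
      -- The only index outside the range of `succ` is `0`, where the weight vanishes.
      induction i using Fin.cases with
      | zero => simp
      | succ j => exact absurd ⟨j, rfl⟩ hi
    · simp [mul_comm]
end
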